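/- For every finite simple graph G with no open twins and no isolated vertices, γ^LTD(G) − 1 ≤ γ^OD(G), where γ^LTD(G) is the minimum cardinality of a locating total-dominating code of G. -/

import Mathlib

/-!
In an open-separating code `C` at most one vertex has empty trace `N(w) ∩ C`. Enlarging `C`
by a single neighbour of such a `w` therefore makes it total-dominating, while separation (and
hence location) survives the passage to a superset. So every OD-code yields an LTD-code with at
most one more vertex. Absence of open twins guarantees that OD-codes exist, so that `gammaOD`
is attained by an actual code.
-/


/-- A set `C` is dominating: every closed neighborhood meets `C`. -/
def Dominating {V : Type*} (G : SimpleGraph V) (C : Set V) : Prop :=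
  ∀ v : V, (insert v (G.neighborSet v) ∩ C).Nonempty

/-- A set `C` is total-dominating: every open neighborhood meets `C`. -/
def TotalDominating {V : Type*} (G : SimpleGraph V) (C : Set V) : Prop :=
  ∀ v : V, (G.neighborSet v ∩ C).Nonempty

/-- A set `C` is open-separating: open neighborhoods have pairwise distinct traces on `C`. -/
def OpenSeparating {V : Type*} (G : SimpleGraph V) (C : Set V) : Prop :=
  ∀ u v : V, u ≠ v → G.neighborSet u ∩ C ≠ G.neighborSet v ∩ C

/-- A set `C` is locating: traces of open neighborhoods on `C` are distinct outside `C`. -/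
def Locating {V : Type*} (G : SimpleGraph V) (C : Set V) : Prop :=
  ∀ u ∈ Cᶜ, ∀ v ∈ Cᶜ, u ≠ v → G.neighborSet u ∩ C ≠ G.neighborSet v ∩ C

/-- An OD-code: dominating and open-separating. -/
def IsODCode {V : Type*} (G : SimpleGraph V) (C : Set V) : Prop :=
  Dominating G C ∧ OpenSeparating G C

/-- An OTD-code: total-dominating and open-separating. -/
def IsOTDCode {V : Type*} (G : SimpleGraph V) (C : Set V) : Prop :=
  TotalDominating G C ∧ OpenSeparating G C

/-- An LD-code: dominating and locating. -/
def IsLDCode {V : Type*} (G : SimpleGraph V) (C : Set V) : Prop :=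
  Dominating G C ∧ Locating G C

/-- An LTD-code: total-dominating and locating. -/
def IsLTDCode {V : Type*} (G : SimpleGraph V) (C : Set V) : Prop :=
  TotalDominating G C ∧ Locating G C

/-- The OD-number: minimum cardinality of an OD-code. -/
noncomputable def gammaOD {V : Type*} (G : SimpleGraph V) : ℕ :=
  sInf {n | ∃ C : Set V, IsODCode G C ∧ C.ncard = n}

/-- The OTD-number: minimum cardinality of an OTD-code. -/
noncomputable def gammaOTD {V : Type*} (G : SimpleGraph V) : ℕ :=
  sInf {n | ∃ C : Set V, IsOTDCode G C ∧ C.ncard = n}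

/-- The LD-number: minimum cardinality of an LD-code. -/
noncomputable def gammaLD {V : Type*} (G : SimpleGraph V) : ℕ :=
  sInf {n | ∃ C : Set V, IsLDCode G C ∧ C.ncard = n}

/-- The LTD-number: minimum cardinality of an LTD-code. -/
noncomputable def gammaLTD {V : Type*} (G : SimpleGraph V) : ℕ :=
  sInf {n | ∃ C : Set V, IsLTDCode G C ∧ C.ncard = n}

/-- `G` has open twins: two distinct vertices with equal open neighborhoods. -/
def HasOpenTwins {V : Type*} (G : SimpleGraph V) : Prop :=
  ∃ u v : V, u ≠ v ∧ G.neighborSet u = G.neighborSet v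

lemma OpenSeparating.mono {V : Type*} {G : SimpleGraph V} {C D : Set V}
    (h : OpenSeparating G C) (hCD : C ⊆ D) : OpenSeparating G D := by
  intro u v huv heq
  apply h u v huv
  rw [← Set.inter_eq_self_of_subset_right hCD, ← Set.inter_assoc, ← Set.inter_assoc, heq]

lemma OpenSeparating.locating {V : Type*} {G : SimpleGraph V} {C : Set V}
    (h : OpenSeparating G C) : Locating G C :=
  fun u _ v _ huv => h u v huv

lemma isODCode_univ {V : Type*} {G : SimpleGraph V} (htwins : ¬ HasOpenTwins G) :
    IsODCode G Set.univ := by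
  refine ⟨fun v => ⟨v, Set.mem_insert _ _, trivial⟩, fun u v huv heq => htwins ⟨u, v, huv, ?_⟩⟩
  simpa using heq

/-- An open-separating code becomes an LTD-code after adding at most one vertex, provided that
no vertex is isolated. -/
lemma OpenSeparating.exists_isLTDCode {V : Type*} {G : SimpleGraph V} {C : Set V}
    (h : OpenSeparating G C) (hiso : ∀ v : V, (G.neighborSet v).Nonempty) :
    ∃ D : Set V, IsLTDCode G D ∧ D.ncard ≤ C.ncard + 1 := by
  by_cases htd : TotalDominating G C
  · exact ⟨C, ⟨htd, h.locating⟩, Nat.le_succ _⟩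
  · obtain ⟨w, hw⟩ := not_forall.mp htd
    rw [Set.not_nonempty_iff_eq_empty] at hw
    obtain ⟨x, hx⟩ := hiso w
    refine ⟨insert x C, ⟨fun v => ?_, (h.mono (Set.subset_insert x C)).locating⟩,
      Set.ncard_insert_le x C⟩
    by_cases hvw : v = w
    · subst hvw
      exact ⟨x, hx, Set.mem_insert x C⟩
    · have hv : (G.neighborSet v ∩ C).Nonempty := by
        rw [Set.nonempty_iff_ne_empty, ← hw]
        exact h v w hvw
      exact hv.mono (Set.inter_subset_inter_right _ (Set.subset_insert x C))

/-- For an open twin-free graph without isolated vertices,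
`γ^LTD(G) - 1 ≤ γ^OD(G)`. -/
theorem gammaLTD_sub_one_le_gammaOD {V : Type*} [Fintype V] (G : SimpleGraph V)
    (htwins : ¬ HasOpenTwins G)
    (hiso : ∀ v : V, (G.neighborSet v).Nonempty) :
    gammaLTD G - 1 ≤ gammaOD G := by
  have hne : {n | ∃ C : Set V, IsODCode G C ∧ C.ncard = n}.Nonempty :=
    ⟨_, Set.univ, isODCode_univ htwins, rfl⟩
  obtain ⟨C, hC, hcard⟩ := Nat.sInf_mem hne
  obtain ⟨D, hD, hDC⟩ := hC.2.exists_isLTDCode hiso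
  have hle : gammaLTD G ≤ D.ncard := Nat.sInf_le ⟨D, hD, rfl⟩
  have hOD : C.ncard = gammaOD G := hcard
  omega
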